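/- arXiv:1201.1633 — 2 statements merged into one kernel-verified Lean document; each statement's English description precedes it below -/
import Mathlib

section
/- The function d_2(u,v) := H(ū,v̄) + ⌈|l(u) − l(v)|/2⌉ is an integer-valued metric on Σ*: d_2(u,v) = 0 iff u = v, d_2 is symmetric, and d_2(u,v) ≤ d_2(u,w) + d_2(w,v) for all words u, v, w ∈ Σ*. -/
/-- The truncated Hamming function `H(ū,v̄)`: the Hamming distance between the
first `min (l u) (l v)` letters of `u` and of `v` (computed via `zip`, which
truncates to the common length).  For words of equal length it is the usual
Hamming distance. -/
def hamming {α : Type*} [DecidableEq α] (u v : List α) : ℕ :=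
  (u.zip v).countP (fun p => decide (p.1 ≠ p.2))

/-- The metric `d₂(u,v) = H(ū,v̄) + ⌈|l(u) − l(v)|/2⌉`
(note `⌈m/2⌉ = (m + 1)/2` in natural-number division). -/
def d2 {α : Type*} [DecidableEq α] (u v : List α) : ℕ :=
  hamming u v + (Nat.dist u.length v.length + 1) / 2

/-!
The truncated Hamming distance alone violates the triangle inequality: a short intermediate word `w`
misses the mismatches of `u` and `v` beyond its end, up to `min (l u) (l v) - l w` of them. The
sum `|l u - l w| + |l w - l v|` exceeds `|l u - l v|` by at least twice that number, and `⌈x / 2⌉`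
is subadditive, so charging `⌈x / 2⌉` for a length difference `x` makes up for the loss.
-/

theorem natDist_add_two_mul_min_tsub_le (m n k : ℕ) :
    Nat.dist m n + 2 * (min m n - k) ≤ Nat.dist m k + Nat.dist k n := by
  unfold Nat.dist
  omega

section Words

variable {A : Type*} [DecidableEq A]

@[simp]
theorem hamming_nil_left (v : List A) : hamming [] v = 0 := rfl

@[simp]
theorem hamming_nil_right (u : List A) : hamming u [] = 0 := by
  simp [hamming]

theorem hamming_cons_cons (a b : A) (u v : List A) :
    hamming (a :: u) (b :: v) = hamming u v + if a ≠ b then 1 else 0 := by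
  simp [hamming, List.countP_cons]

theorem hamming_comm (u v : List A) : hamming u v = hamming v u := by
  simp only [hamming, ← List.zip_swap v u, List.countP_map, Function.comp_def, Prod.fst_swap,
    Prod.snd_swap, ne_comm]

theorem hamming_le_min_length (u v : List A) : hamming u v ≤ min u.length v.length :=
  List.countP_le_length.trans_eq List.length_zip

theorem hamming_eq_zero_iff_prefix_or_prefix {u v : List A} :
    hamming u v = 0 ↔ u <+: v ∨ v <+: u := by
  induction u generalizing v with
  | nil => simp
  | cons a u ih =>
    cases v with
    | nil => simp
    | cons b v =>
      by_cases hab : a = b <;> simp [hamming_cons_cons, List.cons_prefix_cons, ih, hab, eq_comm]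

theorem hamming_le_add_add_min_length_tsub (u v w : List A) :
    hamming u v ≤ hamming u w + hamming w v + (min u.length v.length - w.length) := by
  induction w generalizing u v with
  | nil => simpa using hamming_le_min_length u v
  | cons c w ih =>
    rcases u with _ | ⟨a, u⟩
    · simp
    rcases v with _ | ⟨b, v⟩
    · simp
    have head_triangle :
        (if a ≠ b then 1 else 0) ≤ (if a ≠ c then 1 else 0) + (if c ≠ b then 1 else 0) := by
      grind
    have tail_triangle := ih u v
    simp only [hamming_cons_cons, List.length_cons]
    omega

theorem d2_eq_zero_iff {u v : List A} : d2 u v = 0 ↔ u = v := by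
  constructor
  · intro h
    have hamming_zero : hamming u v = 0 := by unfold d2 at h; omega
    have length_eq : u.length = v.length :=
      Nat.eq_of_dist_eq_zero (by unfold d2 at h; omega)
    rcases hamming_eq_zero_iff_prefix_or_prefix.mp hamming_zero with huv | hvu
    · exact huv.eq_of_length length_eq
    · exact (hvu.eq_of_length length_eq.symm).symm
  · rintro rfl
    simp [d2, Nat.dist_self, hamming_eq_zero_iff_prefix_or_prefix]

theorem d2_comm (u v : List A) : d2 u v = d2 v u := by
  rw [d2, d2, hamming_comm, Nat.dist_comm]

theorem d2_triangle (u v w : List A) : d2 u v ≤ d2 u w + d2 w v := by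
  have hamming_bound := hamming_le_add_add_min_length_tsub u v w
  have length_bound := natDist_add_two_mul_min_tsub_le u.length v.length w.length
  unfold d2
  omega

end Words

theorem stmt_4 {A : Type*} [DecidableEq A] :
    (∀ u v : List A, d2 u v = 0 ↔ u = v) ∧
    (∀ u v : List A, d2 u v = d2 v u) ∧
    (∀ u v w : List A, d2 u v ≤ d2 u w + d2 w v) := by
  exact ⟨fun _ _ => d2_eq_zero_iff, d2_comm, d2_triangle⟩
end

section
/- Let Σ = {0,1} be the binary alphabet and let δ be any integer-valued Hamming compatible metric on Σ*. Then for every word w and every n ≥ l(w), at least half of the words of length n satisfy the inequality δ(u,w) ≥ d_2(u,w); that is, |{u ∈ Σ_n : δ(u,w) ≥ d_2(u,w)}| ≥ 2^{n−1}. -/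
/-!
Replacing `u` by its Hamming opposite `u.map not` turns agreements with `w` into disagreements, so
when `l(w) ≤ l(u) = n` the two `d₂`-distances to `w` add up to at most `n + 1`. By the triangle
inequality the two `δ`-distances to `w` add up to at least `δ(u, u.map not) = n`. As all distances
are integers, `δ < d₂` cannot hold at both words of an opposite pair.
-/

theorem ncard_le_two_mul_ncard_sep_of_injOn {α : Type*} {s : Set α} {f : α → α} {p : α → Prop}
    (hs : s.Finite) (hmaps : Set.MapsTo f s s) (hinj : Set.InjOn f s)
    (hp : ∀ x ∈ s, p x ∨ p (f x)) : s.ncard ≤ 2 * {x ∈ s | p x}.ncard := by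
  have hdiff : (s \ {x | p x}).ncard ≤ {x ∈ s | p x}.ncard :=
    Set.ncard_le_ncard_of_injOn f
      (fun x hx ↦ ⟨hmaps hx.1, (hp x hx.1).resolve_left hx.2⟩)
      (hinj.mono Set.sdiff_subset) (hs.subset (Set.sep_subset s p))
  have hsplit : {x ∈ s | p x}.ncard + (s \ {x | p x}).ncard = s.ncard :=
    Set.ncard_inter_add_ncard_sdiff_eq_ncard s {x | p x} hs
  omega

theorem ncard_setOf_length_eq (α : Type*) [Fintype α] (n : ℕ) :
    {u : List α | u.length = n}.ncard = Fintype.card α ^ n :=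
  calc {u : List α | u.length = n}.ncard
      = Nat.card (List.Vector α n) := rfl
    _ = Fintype.card α ^ n := by rw [Nat.card_eq_fintype_card, card_vector]

theorem hamming_map_self_of_forall_ne {α : Type*} [DecidableEq α] {f : α → α}
    (hf : ∀ a, f a ≠ a) (u : List α) : hamming u (u.map f) = u.length := by
  induction u with
  | nil => rfl
  | cons a u ih => simpa [hamming, (hf a).symm] using ih

theorem hamming_add_hamming_map_not (u v : List Bool) :
    hamming u v + hamming (u.map not) v = min u.length v.length := by
  have hagree : hamming (u.map not) v = (u.zip v).countP fun q ↦ ¬decide (q.1 ≠ q.2) := by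
    rw [hamming, List.zip_map_left, List.countP_map]
    congr 1
    ext ⟨a, b⟩
    cases a <;> cases b <;> rfl
  rw [hagree, hamming, ← List.length_eq_countP_add_countP, List.length_zip]

theorem d2_add_d2_map_not_le (u v : List Bool) :
    d2 u v + d2 (u.map not) v ≤ max u.length v.length + 1 := by
  have hsum := hamming_add_hamming_map_not u v
  simp only [d2, Nat.dist, List.length_map]
  omega

theorem stmt_16_general (δ : List Bool → List Bool → ℕ)
    (hsymm : ∀ u v : List Bool, δ u v = δ v u)
    (htri : ∀ u v w : List Bool, δ u v ≤ δ u w + δ w v)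
    (hopp : ∀ u : List Bool, u.length ≤ δ u (u.map not))
    (w : List Bool) (n : ℕ) (hwn : w.length ≤ n) :
    2 ^ (n - 1) ≤ {u : List Bool | u.length = n ∧ d2 u w ≤ δ u w}.ncard := by
  have hpair : ∀ u ∈ {u : List Bool | u.length = n},
      d2 u w ≤ δ u w ∨ d2 (u.map not) w ≤ δ (u.map not) w := by
    intro u (hu : u.length = n)
    have hδ : n ≤ δ u w + δ (u.map not) w :=
      calc n = u.length := hu.symm
        _ ≤ δ u (u.map not) := hopp u
        _ ≤ δ u w + δ w (u.map not) := htri u (u.map not) w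
        _ = δ u w + δ (u.map not) w := by rw [hsymm w]
    have hd2 : d2 u w + d2 (u.map not) w ≤ n + 1 := by
      simpa only [hu, max_eq_left hwn] using d2_add_d2_map_not_le u w
    omega
  have hhalf : 2 ^ n ≤ 2 * {u : List Bool | u.length = n ∧ d2 u w ≤ δ u w}.ncard := by
    rw [← Fintype.card_bool, ← ncard_setOf_length_eq Bool n]
    exact ncard_le_two_mul_ncard_sep_of_injOn (List.finite_length_eq Bool n)
      (fun u hu ↦ (List.length_map not).trans hu)
      (List.map_injective_iff.mpr Bool.not_injective).injOn hpair
  -- For `n = 0` the exponent `n - 1` truncates, and the claim is that the count is positive.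
  cases n with
  | zero => omega
  | succ n => rw [pow_succ] at hhalf; rw [Nat.add_sub_cancel]; omega

theorem stmt_16
    (δ : List Bool → List Bool → ℕ)
    -- δ is a metric on Σ* for the binary alphabet Σ = {0,1}
    (hrefl : ∀ u v : List Bool, δ u v = 0 ↔ u = v)
    (hsymm : ∀ u v : List Bool, δ u v = δ v u)
    (htri : ∀ u v w : List Bool, δ u v ≤ δ u w + δ w v)
    -- δ is Hamming compatible
    (hcompat : ∀ u v : List Bool, u.length = v.length → δ u v = hamming u v) :
    ∀ (w : List Bool) (n : ℕ), w.length ≤ n →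
      2 ^ (n - 1) ≤ {u : List Bool | u.length = n ∧ d2 u w ≤ δ u w}.ncard := by
  refine stmt_16_general δ hsymm htri fun u ↦ ?_
  rw [hcompat u _ (List.length_map not).symm, hamming_map_self_of_forall_ne Bool.not_ne_self]
end
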